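/- Let f_{c,d}(n,k) be the number of overlapping ballots of [n] with exactly k blocks whose last block has minimum c and maximum d. Then f_{c,d}(n,k) = [c=1 ∧ d=n ∧ k=1] + [c=d]·∑_{a=1}^{c−1}∑_{b=c}^{n} f_{a,b}(n−1, k−1) + [c<d]·∑_{ℓ=0}^{d−c−1} C(d−c−1,ℓ) ∑_{a=1}^{d−ℓ−2} ∑_{b=c}^{n−ℓ−2} f_{a,b}(n−ℓ−2, k−1), and the number of pop-stacked permutations of [n] with exactly k ascending runs is f(n,k) = ∑_{1≤a≤b≤n} f_{a,b}(n,k). -/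

import Mathlib

/-- The maximal descending runs of a list, in order. -/
def descRuns : List ℕ → List (List ℕ)
  | [] => []
  | a :: l =>
    match descRuns l with
    | (b :: r) :: rs => if b < a then (a :: b :: r) :: rs else [a] :: (b :: r) :: rs
    | _ => [[a]]

/-- The maximal ascending runs of a list, in order. -/
def ascRuns : List ℕ → List (List ℕ)
  | [] => []
  | a :: l =>
    match ascRuns l with
    | (b :: r) :: rs => if a < b then (a :: b :: r) :: rs else [a] :: (b :: r) :: rs
    | _ => [[a]]

/-- The pop-stack operator: reverse each maximal descending run. -/
def popStack (l : List ℕ) : List ℕ := ((descRuns l).map List.reverse).flatten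

/-- `l` is (the one-line notation of) a permutation of `[n] = {1,…,n}`. -/
def IsPermOf (n : ℕ) (l : List ℕ) : Prop := l.Perm (List.range' 1 n)

/-- Minimum of a list of naturals. -/
noncomputable def lmin (l : List ℕ) : ℕ := sInf {x | x ∈ l}

/-- Maximum of a list of naturals. -/
def lmax (l : List ℕ) : ℕ := l.foldr max 0

/-- Minimum of a finset of naturals. -/
noncomputable def bmin (B : Finset ℕ) : ℕ := sInf (B : Set ℕ)

/-- Maximum of a finset of naturals. -/
def bmax (B : Finset ℕ) : ℕ := B.sup id

/-- A ballot (ordered set partition) with underlying set `U`. -/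
def IsBallot (U : Finset ℕ) (l : List (Finset ℕ)) : Prop :=
  (∀ B ∈ l, B.Nonempty) ∧ l.Pairwise Disjoint ∧ l.foldr (· ∪ ·) ∅ = U

/-- A ballot is overlapping if adjacent blocks satisfy
`max Bᵢ > min Bᵢ₊₁` and `min Bᵢ < max Bᵢ₊₁`. -/
def Overlapping (l : List (Finset ℕ)) : Prop :=
  l.Chain' fun B C => bmin C < bmax B ∧ bmin B < bmax C

/-- `σ` is pop-stacked: it is the image of some permutation of `[n]` under `popStack`. -/
def IsPopStacked (n : ℕ) (σ : List ℕ) : Prop :=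
  ∃ π, IsPermOf n π ∧ popStack π = σ

/-- `f_{c,d}(n)`: overlapping ballots of `[n]` whose last block has min `c` and max `d`. -/
noncomputable def fcd (c d n : ℕ) : ℕ :=
  Nat.card {l : List (Finset ℕ) // IsBallot (Finset.Icc 1 n) l ∧ Overlapping l ∧
    ∃ B, l.getLast? = some B ∧ bmin B = c ∧ bmax B = d}

/-- `f_{c,d}(n,k)`: overlapping ballots of `[n]` with `k` blocks whose last block has
min `c` and max `d`. -/
noncomputable def fcdk (c d n k : ℕ) : ℕ :=
  Nat.card {l : List (Finset ℕ) // IsBallot (Finset.Icc 1 n) l ∧ Overlapping l ∧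
    l.length = k ∧ ∃ B, l.getLast? = some B ∧ bmin B = c ∧ bmax B = d}

/-- The number of pop-stacked permutations of `[n]`. -/
noncomputable def popCount (n : ℕ) : ℕ :=
  Nat.card {σ : List ℕ // IsPermOf n σ ∧ IsPopStacked n σ}

/-- The number of pop-stacked permutations of `[n]` with exactly `k` ascending runs. -/
noncomputable def popCountK (n k : ℕ) : ℕ :=
  Nat.card {σ : List ℕ // IsPermOf n σ ∧ IsPopStacked n σ ∧ (ascRuns σ).length = k}

/-- Greedy sorting with a pop-stack whose contents increase from top to bottom:
push when possible, otherwise pop the whole stack. -/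
def greedyPop : List ℕ → List ℕ → List ℕ
  | stack, [] => stack
  | [], a :: rest => greedyPop [a] rest
  | t :: s, a :: rest =>
    if a < t then greedyPop (a :: t :: s) rest
    else (t :: s) ++ greedyPop [a] rest

/-!
Remove the last block `B` of an overlapping ballot of `[n]` and standardise the remaining blocks
along the increasing enumeration `e` of the complement of `B`. Since `min B < e y ↔ min B ≤ y` and
`e x < max B ↔ x + |B| ≤ max B`, the number of ways to complete `B` depends only on `min B`,
`max B` and `|B|`. The blocks with minimum `c` and maximum `d` form the interval from `{c, d}` to
`{c, …, d}` in the lattice of finite sets; counting it by cardinality gives the binomial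
coefficients, and for `c = d` it is the single block `{c}`.

The ascending runs of `popStack π` are unions of consecutive reversed descending runs of `π`, so
they inherit from the latter the condition `min A ≤ max A'` on adjacent runs. Conversely, if the
ascending runs of `σ` satisfy this condition, then reversing each of them gives a word whose
descending runs are exactly the reversed ones, so that `popStack` sends it back to `σ`. The other
half of the overlap condition, `min A' ≤ max A`, always holds for adjacent ascending runs.
-/

theorem bmin_mem {B : Finset ℕ} (hB : B.Nonempty) : bmin B ∈ B :=
  Nat.sInf_mem hB

theorem bmin_le {B : Finset ℕ} {x : ℕ} (hx : x ∈ B) : bmin B ≤ x :=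
  Nat.sInf_le hx

theorem le_bmax {B : Finset ℕ} {x : ℕ} (hx : x ∈ B) : x ≤ bmax B :=
  Finset.le_sup (f := id) hx

theorem bmax_mem {B : Finset ℕ} (hB : B.Nonempty) : bmax B ∈ B := by
  obtain ⟨x, hx, h⟩ := Finset.exists_mem_eq_sup B hB id
  exact (show bmax B = x from h) ▸ hx

theorem bmin_Icc {m n : ℕ} (h : m ≤ n) : bmin (Finset.Icc m n) = m := by
  simp [bmin, csInf_Icc h]

theorem bmax_Icc {m n : ℕ} (h : m ≤ n) : bmax (Finset.Icc m n) = n :=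
  (Finset.mem_Icc.1 (bmax_mem (Finset.nonempty_Icc.2 h))).2.antisymm
    (le_bmax (Finset.right_mem_Icc.2 h))

theorem bmin_image {e : ℕ → ℕ} (he : Monotone e) {B : Finset ℕ} (hB : B.Nonempty) :
    bmin (B.image e) = e (bmin B) := by
  obtain ⟨x, hx, hxe⟩ := Finset.mem_image.1 (bmin_mem (hB.image e))
  exact (bmin_le (Finset.mem_image_of_mem e (bmin_mem hB))).antisymm (hxe ▸ he (bmin_le hx))

theorem bmax_image {e : ℕ → ℕ} (he : Monotone e) {B : Finset ℕ} (hB : B.Nonempty) :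
    bmax (B.image e) = e (bmax B) := by
  obtain ⟨x, hx, hxe⟩ := Finset.mem_image.1 (bmax_mem (hB.image e))
  exact (hxe ▸ he (le_bmax hx)).antisymm (le_bmax (Finset.mem_image_of_mem e (bmax_mem hB)))

theorem bmin_le_bmax_of_subset {A A' B B' : Finset ℕ} (hne : A.Nonempty) (hA : A ⊆ A')
    (hB : B ⊆ B') (h : bmin A ≤ bmax B) : bmin A' ≤ bmax B' :=
  calc
    bmin A' ≤ bmin A := bmin_le (hA (bmin_mem hne))
    _ ≤ bmax B := h
    _ ≤ bmax B' := Finset.sup_mono hB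

theorem bmin_le_bmax_iff_lt {A B : Finset ℕ} (hAB : Disjoint A B) (hA : A.Nonempty)
    (hB : B.Nonempty) : bmin A ≤ bmax B ↔ bmin A < bmax B :=
  (Finset.disjoint_iff_ne.1 hAB _ (bmin_mem hA) _ (bmax_mem hB)).le_iff_lt

theorem mem_Icc_pair_Icc_iff {c d : ℕ} {B : Finset ℕ} :
    B ∈ Finset.Icc {c, d} (Finset.Icc c d) ↔ B.Nonempty ∧ bmin B = c ∧ bmax B = d := by
  simp only [Finset.mem_Icc, Finset.insert_subset_iff,
    Finset.singleton_subset_iff]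
  constructor
  · rintro ⟨⟨hc, hd⟩, hB⟩
    have hne : B.Nonempty := ⟨c, hc⟩
    exact ⟨hne, (bmin_le hc).antisymm (Finset.mem_Icc.1 (hB (bmin_mem hne))).1,
      (Finset.mem_Icc.1 (hB (bmax_mem hne))).2.antisymm (le_bmax hd)⟩
  · rintro ⟨hne, rfl, rfl⟩
    exact ⟨⟨bmin_mem hne, bmax_mem hne⟩, fun x hx => Finset.mem_Icc.2 ⟨bmin_le hx, le_bmax hx⟩⟩

theorem sum_Icc_apply_card {α M : Type*} [DecidableEq α] [AddCommMonoid M] {s t : Finset α}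
    (h : s ⊆ t) (f : ℕ → M) :
    ∑ u ∈ Finset.Icc s t, f u.card =
      ∑ j ∈ Finset.range ((t \ s).card + 1), (t \ s).card.choose j • f (s.card + j) := by
  have hdisj : ∀ v ∈ (t \ s).powerset, Disjoint s v := fun v hv =>
    Finset.disjoint_of_subset_right (Finset.mem_powerset.1 hv) Finset.disjoint_sdiff
  rw [Finset.Icc_eq_image_powerset h, Finset.sum_image, ← Finset.sum_powerset_apply_card]
  · exact Finset.sum_congr rfl fun v hv => by rw [Finset.card_union_of_disjoint (hdisj v hv)]
  · intro v hv w hw (hvw : s ∪ v = s ∪ w)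
    rw [← Finset.union_sdiff_cancel_left (hdisj v hv), hvw,
      Finset.union_sdiff_cancel_left (hdisj w hw)]

theorem isBallot_iff {U : Finset ℕ} {l : List (Finset ℕ)} :
    IsBallot U l ↔
      (∀ B ∈ l, B.Nonempty) ∧ l.Pairwise Disjoint ∧ ∀ x, x ∈ U ↔ ∃ B ∈ l, x ∈ B := by
  have hmem : ∀ x, x ∈ l.foldr (· ∪ ·) ∅ ↔ ∃ B ∈ l, x ∈ B := by
    intro x
    induction l with
    | nil => simp
    | cons B l ih => simp [ih]
  simp only [IsBallot, Finset.ext_iff, hmem, iff_comm]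

theorem IsBallot.subset {U : Finset ℕ} {l : List (Finset ℕ)} (hl : IsBallot U l)
    {B : Finset ℕ} (hB : B ∈ l) : B ⊆ U :=
  fun x hx => ((isBallot_iff.1 hl).2.2 x).2 ⟨B, hB, hx⟩

theorem isBallot_concat {U B : Finset ℕ} {l : List (Finset ℕ)} :
    IsBallot U (l ++ [B]) ↔ B.Nonempty ∧ B ⊆ U ∧ IsBallot (U \ B) l := by
  simp only [isBallot_iff, List.pairwise_append, Finset.subset_iff, Finset.mem_sdiff,
    Finset.disjoint_left]
  grind

theorem isBallot_map_image {e : ℕ → ℕ} (he : e.Injective) {U : Finset ℕ}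
    {l : List (Finset ℕ)} : IsBallot (U.image e) (l.map (Finset.image e)) ↔ IsBallot U l := by
  have hunion : (l.map (Finset.image e)).foldr (· ∪ ·) ∅ = (l.foldr (· ∪ ·) ∅).image e := by
    induction l with
    | nil => simp
    | cons B l ih => simp [ih, Finset.image_union]
  simp only [IsBallot, hunion, (Finset.image_injective he).eq_iff, List.pairwise_map,
    Finset.disjoint_image he, List.forall_mem_map, Finset.image_nonempty]

theorem overlapping_map_image {e : ℕ → ℕ} (he : StrictMono e) {l : List (Finset ℕ)}
    (hl : ∀ B ∈ l, B.Nonempty) : Overlapping (l.map (Finset.image e)) ↔ Overlapping l := by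
  refine (List.isChain_map _).trans (List.IsChain.iff_of_mem_imp fun {B C} hB hC => ?_)
  simp only [bmin_image he.monotone, bmax_image he.monotone, hl B hB, hl C hC, he.lt_iff_lt]

theorem overlapping_iff_of_pairwise_disjoint {l : List (Finset ℕ)} (hne : ∀ B ∈ l, B.Nonempty)
    (hl : l.Pairwise Disjoint) :
    Overlapping l ↔ (l.IsChain fun B C => bmin C ≤ bmax B) ∧
      l.IsChain fun B C => bmin B ≤ bmax C := by
  have hlt (i : ℕ) (hi : i + 1 < l.length) :
      (bmin l[i + 1] < bmax l[i] ∧ bmin l[i] < bmax l[i + 1]) ↔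
        bmin l[i + 1] ≤ bmax l[i] ∧ bmin l[i] ≤ bmax l[i + 1] := by
    have hdisj := List.pairwise_iff_getElem.1 hl i (i + 1) (by omega) hi (by omega)
    have hB : l[i].Nonempty := hne _ (List.getElem_mem _)
    have hC : l[i + 1].Nonempty := hne _ (List.getElem_mem _)
    rw [bmin_le_bmax_iff_lt hdisj hB hC, bmin_le_bmax_iff_lt hdisj.symm hC hB]
  change List.IsChain _ l ↔ _
  simp only [List.isChain_iff_getElem, hlt, forall_and]

/-- The overlapping ballots of `U` with exactly `k` blocks. -/
def overlappingBallots (U : Finset ℕ) (k : ℕ) : Set (List (Finset ℕ)) :=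
  {l | IsBallot U l ∧ Overlapping l ∧ l.length = k}

/-- The overlapping ballots of `U` with exactly `k` blocks whose last block satisfies `P`. An
arbitrary `P` is allowed because removing the last block of a ballot turns a condition on that
block into a different kind of condition on the new last block. -/
def ballotsEndingIn (U : Finset ℕ) (k : ℕ) (P : Finset ℕ → Prop) : Set (List (Finset ℕ)) :=
  {l ∈ overlappingBallots U k | ∃ B, l.getLast? = some B ∧ P B}

theorem fcdk_eq_ncard (c d n k : ℕ) :
    fcdk c d n k =
      (ballotsEndingIn (Finset.Icc 1 n) k fun B => bmin B = c ∧ bmax B = d).ncard := by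
  simp only [ballotsEndingIn, overlappingBallots, Set.mem_ofPred_eq, and_assoc]
  rfl

theorem overlappingBallots_finite (U : Finset ℕ) (k : ℕ) : (overlappingBallots U k).Finite := by
  have := (List.finite_length_eq U.powerset k).image (List.map Subtype.val)
  refine this.subset fun l ⟨hl, _, hk⟩ => ?_
  exact ⟨l.attach.map fun B => ⟨B.1, Finset.mem_powerset.2 (hl.subset B.2)⟩, by simpa using hk,
    by simp⟩

theorem ballotsEndingIn_finite (U : Finset ℕ) (k : ℕ) (P : Finset ℕ → Prop) :
    (ballotsEndingIn U k P).Finite :=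
  (overlappingBallots_finite U k).subset fun _ hl => hl.1

theorem ballotsEndingIn_congr {U : Finset ℕ} {k : ℕ} {P Q : Finset ℕ → Prop}
    (h : ∀ B, B.Nonempty → B ⊆ U → (P B ↔ Q B)) :
    ballotsEndingIn U k P = ballotsEndingIn U k Q := by
  ext l
  refine and_congr_right fun hl => exists_congr fun B => and_congr_right fun hB => ?_
  have hBl := List.mem_of_getLast? hB
  exact h B (hl.1.1 B hBl) (hl.1.subset hBl)

theorem ballotsEndingIn_zero (U : Finset ℕ) (P : Finset ℕ → Prop) : ballotsEndingIn U 0 P = ∅ := by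
  ext l
  simp +contextual [ballotsEndingIn, overlappingBallots, List.length_eq_zero_iff]

theorem fcdk_zero (c d n : ℕ) : fcdk c d n 0 = 0 := by
  rw [fcdk_eq_ncard, ballotsEndingIn_zero, Set.ncard_empty]

theorem overlappingBallots_one {U : Finset ℕ} (hU : U.Nonempty) :
    overlappingBallots U 1 = {[U]} := by
  ext l
  rw [Set.mem_singleton_iff]
  constructor
  · rintro ⟨hl, -, hk⟩
    obtain ⟨B, rfl⟩ := List.length_eq_one_iff.1 hk
    simpa using hl.2.2
  · rintro rfl
    exact ⟨⟨by simpa using hU, by simp, by simp⟩, List.isChain_singleton _, rfl⟩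

theorem ncard_ballotsEndingIn_mem {ι : Type*} (U : Finset ℕ) (k : ℕ) (f : Finset ℕ → ι)
    (t : Finset ι) :
    (ballotsEndingIn U k fun B => f B ∈ t).ncard =
      ∑ i ∈ t, (ballotsEndingIn U k fun B => f B = i).ncard := by
  have hunion : (ballotsEndingIn U k fun B => f B ∈ t) =
      ⋃ i ∈ (t : Set ι), ballotsEndingIn U k fun B => f B = i := by
    ext l
    simp only [ballotsEndingIn, Set.mem_ofPred_eq, Set.mem_iUnion, SetLike.mem_coe]
    grind
  have hdisj : (t : Set ι).PairwiseDisjoint fun i => ballotsEndingIn U k fun B => f B = i := by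
    intro i _ j _ hij
    refine Set.disjoint_left.2 ?_
    rintro l ⟨-, B, hB, rfl⟩ ⟨-, B', hB', rfl⟩
    exact hij (congrArg f (Option.some.inj (hB.symm.trans hB')))
  rw [hunion, t.finite_toSet.ncard_biUnion (fun i _ => ballotsEndingIn_finite U k _) hdisj,
    finsum_mem_coe_finset]

theorem sum_sum_fcdk (n k : ℕ) (I : Finset ℕ) (J : ℕ → Finset ℕ) :
    ∑ a ∈ I, ∑ b ∈ J a, fcdk a b n k =
      (ballotsEndingIn (Finset.Icc 1 n) k fun B => bmin B ∈ I ∧ bmax B ∈ J (bmin B)).ncard := by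
  simp only [fcdk_eq_ncard]
  rw [Finset.sum_sigma']
  have := ncard_ballotsEndingIn_mem (Finset.Icc 1 n) k
    (fun B => (⟨bmin B, bmax B⟩ : (_ : ℕ) × ℕ)) (I.sigma J)
  simpa only [Finset.mem_sigma, Sigma.ext_iff, heq_eq_eq] using this.symm

theorem sum_Icc_sum_Icc_fcdk (m c k : ℕ) {n N : ℕ} (hN : n ≤ N) :
    ∑ a ∈ Finset.Icc 1 m, ∑ b ∈ Finset.Icc c N, fcdk a b n k =
      (ballotsEndingIn (Finset.Icc 1 n) k fun A => bmin A ≤ m ∧ c ≤ bmax A).ncard := by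
  rw [sum_sum_fcdk]
  congr 1
  refine ballotsEndingIn_congr fun A hA hAn => ?_
  have hmin := Finset.mem_Icc.1 (hAn (bmin_mem hA))
  have hmax := Finset.mem_Icc.1 (hAn (bmax_mem hA))
  simp only [Finset.mem_Icc]
  omega

theorem ballotsEndingIn_succ_eq_image {U B : Finset ℕ} (hB : B.Nonempty) (hBU : B ⊆ U) {k : ℕ}
    (hk : k ≠ 0) :
    ballotsEndingIn U (k + 1) (· = B) =
      (· ++ [B]) ''
        ballotsEndingIn (U \ B) k fun A => bmin B < bmax A ∧ bmin A < bmax B := by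
  ext l
  constructor
  · rintro ⟨⟨hl, ho, hlen⟩, _, hlast, rfl⟩
    obtain ⟨l, rfl⟩ := List.getLast?_eq_some_iff.1 hlast
    have hlen : l.length = k := by simpa using hlen
    obtain ⟨A, hA⟩ := Option.isSome_iff_exists.1
      (List.getLast?_isSome.2 (List.ne_nil_of_length_pos (hlen ▸ Nat.pos_of_ne_zero hk)))
    obtain ⟨hchain, -, hadj⟩ := List.isChain_append.1 ho
    exact ⟨l, ⟨⟨(isBallot_concat.1 hl).2.2, hchain, hlen⟩, A, hA, hadj A hA _ rfl⟩, rfl⟩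
  · rintro ⟨l, ⟨⟨hl, ho, hlen⟩, A, hA, hAB⟩, rfl⟩
    refine ⟨⟨isBallot_concat.2 ⟨hB, hBU, hl⟩, ?_, by simp [hlen]⟩, B, by simp, rfl⟩
    refine List.isChain_append.2 ⟨ho, List.isChain_singleton _, ?_⟩
    rintro A' hA' _ ⟨⟩
    rw [Option.mem_def, hA] at hA'
    exact Option.some.inj hA' ▸ hAB

theorem ballotsEndingIn_image {e : ℕ → ℕ} (he : StrictMono e) (U : Finset ℕ) (k : ℕ)
    (P : Finset ℕ → Prop) :
    ballotsEndingIn (U.image e) k P =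
      List.map (Finset.image e) '' ballotsEndingIn U k fun B => P (B.image e) := by
  ext l
  constructor
  · rintro ⟨⟨hl, ho, hlen⟩, hP⟩
    obtain ⟨l, rfl⟩ : l ∈ Set.range (List.map (Finset.image e)) := by
      rw [Set.range_list_map]
      intro B hB
      obtain ⟨A, -, hA⟩ := Finset.subset_image_iff.1 (hl.subset hB)
      exact ⟨A, hA⟩
    have hl' := (isBallot_map_image he.injective).1 hl
    refine ⟨l, ⟨⟨hl', (overlapping_map_image he hl'.1).1 ho, by simpa using hlen⟩, ?_⟩, rfl⟩
    simpa [List.getLast?_map] using hP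
  · rintro ⟨l, ⟨⟨hl, ho, hlen⟩, hP⟩, rfl⟩
    refine ⟨⟨(isBallot_map_image he.injective).2 hl, (overlapping_map_image he hl.1).2 ho,
      by simpa using hlen⟩, ?_⟩
    simpa [List.getLast?_map] using hP

theorem count_notMem (B : Finset ℕ) (m : ℕ) :
    Nat.count (· ∉ B) m = m - {x ∈ B | x < m}.card := by
  have hsdiff : {x ∈ Finset.range m | x ∉ B} = Finset.range m \ {x ∈ B | x < m} := by
    ext x
    simp only [Finset.mem_filter, Finset.mem_sdiff, Finset.mem_range]
    tauto
  rw [Nat.count_eq_card_filter_range, hsdiff, Finset.card_sdiff_of_subset, Finset.card_range]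
  exact fun x hx => Finset.mem_range.2 (Finset.mem_filter.1 hx).2

theorem infinite_notMem (B : Finset ℕ) : (Set.ofPred (· ∉ B)).Infinite :=
  B.finite_toSet.infinite_compl

theorem bmin_lt_nth_notMem_iff {B : Finset ℕ} (hB : B.Nonempty) {y : ℕ} :
    bmin B < Nat.nth (· ∉ B) y ↔ bmin B ≤ y := by
  have hcount : Nat.count (· ∉ B) (bmin B) = bmin B := by
    rw [count_notMem, Finset.filter_false_of_mem fun x hx => (bmin_le hx).not_gt,
      Finset.card_empty, Nat.sub_zero]
  have hne : bmin B ≠ Nat.nth (· ∉ B) y := fun h =>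
    Nat.nth_mem_of_infinite (infinite_notMem B) y (h ▸ bmin_mem hB)
  rw [← hne.le_iff_lt, ← Nat.count_le_iff_le_nth (infinite_notMem B), hcount]

theorem nth_notMem_lt_bmax_iff {B : Finset ℕ} (hB : B.Nonempty) {x : ℕ} :
    Nat.nth (· ∉ B) x < bmax B ↔ x + B.card ≤ bmax B := by
  have hfilter : {x ∈ B | x < bmax B} = B.erase (bmax B) := by
    ext x
    rw [Finset.mem_filter, Finset.mem_erase, and_comm]
    exact and_congr_left fun hx => (le_bmax hx).lt_iff_ne
  have hcard := hB.card_pos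
  rw [← Nat.lt_nth_iff_count_lt (infinite_notMem B), count_notMem, hfilter,
    Finset.card_erase_of_mem (bmax_mem hB)]
  omega

theorem image_nth_notMem {n : ℕ} {B : Finset ℕ} (hB : B ⊆ Finset.Icc 1 n) :
    (Finset.Icc 1 (n - B.card)).image (Nat.nth (· ∉ B)) = Finset.Icc 1 n \ B := by
  have hinf := infinite_notMem B
  have hcard : B.card ≤ n := by simpa using Finset.card_le_card hB
  have hpos (y : ℕ) : 0 < Nat.nth (· ∉ B) y ↔ 0 < y := by
    have h₀ : Nat.nth (· ∉ B) 0 = 0 := Nat.nth_count (p := (· ∉ B)) (n := 0) fun h => by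
      simpa using hB h
    simpa only [h₀] using (Nat.nth_strictMono hinf).lt_iff_lt (a := 0) (b := y)
  have hlt (y : ℕ) : Nat.nth (· ∉ B) y < n + 1 ↔ y < n + 1 - B.card := by
    rw [← Nat.lt_nth_iff_count_lt hinf, count_notMem, Finset.filter_true_of_mem]
    exact fun x hx => Nat.lt_succ_of_le (Finset.mem_Icc.1 (hB hx)).2
  ext x
  simp only [Finset.mem_image, Finset.mem_sdiff, Finset.mem_Icc]
  constructor
  · rintro ⟨y, hy, rfl⟩
    have := (hpos y).2 hy.1
    have := (hlt y).2 (by omega)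
    exact ⟨by omega, Nat.nth_mem_of_infinite hinf y⟩
  · rintro ⟨hx, hxB⟩
    obtain ⟨y, rfl⟩ : x ∈ Set.range (Nat.nth (· ∉ B)) := by
      rwa [Nat.range_nth_of_infinite hinf]
    have := (hpos y).1 hx.1
    have := (hlt y).1 (by omega)
    exact ⟨y, by omega, rfl⟩

theorem ncard_ballotsEndingIn_succ_eq {n k : ℕ} {B : Finset ℕ} (hB : B.Nonempty)
    (hBn : B ⊆ Finset.Icc 1 n) (hk : k ≠ 0) :
    (ballotsEndingIn (Finset.Icc 1 n) (k + 1) (· = B)).ncard =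
      (ballotsEndingIn (Finset.Icc 1 (n - B.card)) k fun A =>
        bmin A ≤ bmax B - B.card ∧ bmin B ≤ bmax A).ncard := by
  have he := Nat.nth_strictMono (infinite_notMem B)
  rw [ballotsEndingIn_succ_eq_image hB hBn hk,
    Set.ncard_image_of_injective _ (List.append_left_injective [B]), ← image_nth_notMem hBn,
    ballotsEndingIn_image he, Set.ncard_image_of_injective _
      (List.map_injective_iff.2 (Finset.image_injective he.injective))]
  congr 1
  refine ballotsEndingIn_congr fun A hA hAn => ?_
  have hpos := (Finset.mem_Icc.1 (hAn (bmin_mem hA))).1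
  rw [bmax_image he.monotone hA, bmin_image he.monotone hA, bmin_lt_nth_notMem_iff hB,
    nth_notMem_lt_bmax_iff hB]
  omega

theorem fcdk_succ_eq_sum_blocks {n c d k : ℕ} (hc : 1 ≤ c) (hd : d ≤ n) (hk : k ≠ 0) :
    fcdk c d n (k + 1) =
      ∑ B ∈ Finset.Icc {c, d} (Finset.Icc c d),
        (ballotsEndingIn (Finset.Icc 1 (n - B.card)) k fun A =>
          bmin A ≤ d - B.card ∧ c ≤ bmax A).ncard := by
  have hlast : (ballotsEndingIn (Finset.Icc 1 n) (k + 1) fun B => bmin B = c ∧ bmax B = d) =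
      ballotsEndingIn (Finset.Icc 1 n) (k + 1) (· ∈ Finset.Icc {c, d} (Finset.Icc c d)) :=
    ballotsEndingIn_congr fun B hB _ => by simp only [mem_Icc_pair_Icc_iff, hB, true_and]
  rw [fcdk_eq_ncard, hlast]
  refine (ncard_ballotsEndingIn_mem _ _ id _).trans ?_
  refine Finset.sum_congr rfl fun B hB => ?_
  have hBn : B ⊆ Finset.Icc 1 n :=
    (Finset.mem_Icc.1 hB).2.trans (Finset.Icc_subset_Icc hc hd)
  obtain ⟨hne, rfl, rfl⟩ := mem_Icc_pair_Icc_iff.1 hB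
  exact ncard_ballotsEndingIn_succ_eq hne hBn hk

theorem ncard_ballotsEndingIn_one {U : Finset ℕ} (hU : U.Nonempty) (P : Finset ℕ → Prop)
    [Decidable (P U)] : (ballotsEndingIn U 1 P).ncard = if P U then 1 else 0 := by
  have hsep : ballotsEndingIn U 1 P = {l ∈ ({[U]} : Set (List (Finset ℕ))) | P U} := by
    ext l
    rw [ballotsEndingIn, overlappingBallots_one hU]
    refine and_congr_right ?_
    rintro rfl
    simp
  split_ifs with h <;> simp [hsep, h]

theorem fcdk_one {n : ℕ} (hn : 1 ≤ n) (c d : ℕ) :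
    fcdk c d n 1 = if c = 1 ∧ d = n then 1 else 0 := by
  rw [fcdk_eq_ncard, ncard_ballotsEndingIn_one (Finset.nonempty_Icc.2 hn), bmin_Icc hn,
    bmax_Icc hn]
  simp only [eq_comm]

theorem fcdk_self_succ {n c k : ℕ} (hc : 1 ≤ c) (hn : c ≤ n) (hk : k ≠ 0) :
    fcdk c c n (k + 1) =
      ∑ a ∈ Finset.Icc 1 (c - 1), ∑ b ∈ Finset.Icc c n, fcdk a b (n - 1) k := by
  simp [fcdk_succ_eq_sum_blocks hc hn hk, sum_Icc_sum_Icc_fcdk]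

theorem fcdk_succ_of_lt {n c d k : ℕ} (hc : 1 ≤ c) (hcd : c < d) (hd : d ≤ n) (hk : k ≠ 0) :
    fcdk c d n (k + 1) =
      ∑ ℓ ∈ Finset.range (d - c), Nat.choose (d - c - 1) ℓ *
        ∑ a ∈ Finset.Icc 1 (d - ℓ - 2), ∑ b ∈ Finset.Icc c (n - ℓ - 2),
          fcdk a b (n - ℓ - 2) k := by
  have hends : {c, d} ⊆ Finset.Icc c d := by
    simp [Finset.insert_subset_iff, hcd.le]
  have hcard : (Finset.Icc c d \ {c, d}).card = d - c - 1 := by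
    rw [Finset.Icc_sdiff_both, Nat.card_Ioo]
  rw [fcdk_succ_eq_sum_blocks hc hd hk, sum_Icc_apply_card hends fun m =>
    (ballotsEndingIn (Finset.Icc 1 (n - m)) k fun A => bmin A ≤ d - m ∧ c ≤ bmax A).ncard,
    hcard, Nat.sub_add_cancel (Nat.sub_pos_of_lt hcd)]
  refine Finset.sum_congr rfl fun ℓ _ => ?_
  rw [sum_Icc_sum_Icc_fcdk _ _ _ le_rfl, Finset.card_pair hcd.ne, Nat.sub_sub d ℓ,
    Nat.sub_sub n ℓ, Nat.add_comm 2, smul_eq_mul]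

theorem splitBy_cons {α : Type*} (r : α → α → Bool) (a : α) (l : List α) :
    (a :: l).splitBy r =
      match l.splitBy r with
      | (b :: t) :: L => if r a b then (a :: b :: t) :: L else [a] :: (b :: t) :: L
      | _ => [[a]] := by
  obtain ⟨hl, hne, hchain, hadj⟩ := List.splitBy_eq_iff.1 (rfl : l.splitBy r = _)
  rcases hL : l.splitBy r with _ | ⟨_ | ⟨b, t⟩, L⟩
  · rw [List.splitBy_eq_nil.1 hL]
    rfl
  · simp [hL] at hne
  · rw [hL] at hl hne hchain hadj
    simp only [List.forall_mem_cons] at hchain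
    dsimp only
    split_ifs with hab <;> rw [List.splitBy_eq_iff]
    · refine ⟨by simp [hl], by simpa using hne,
        List.forall_mem_cons.2 ⟨List.isChain_cons_cons.2 ⟨hab, hchain.1⟩, hchain.2⟩, ?_⟩
      cases L with
      | nil => exact List.isChain_singleton _
      | cons A L => simpa only [List.isChain_cons_cons, List.getLast_cons_cons, ne_eq,
          reduceCtorEq, not_false_eq_true, exists_true_left] using hadj
    · refine ⟨by simp [hl], by simpa using hne,
        List.forall_mem_cons.2 ⟨List.isChain_singleton a, List.forall_mem_cons.2 hchain⟩,
        List.isChain_cons_cons.2 ⟨?_, hadj⟩⟩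
      simpa using hab

theorem ascRuns_eq_splitBy (l : List ℕ) : ascRuns l = l.splitBy fun a b => decide (a < b) := by
  induction l with
  | nil => rfl
  | cons a l ih =>
    rw [splitBy_cons, ascRuns, ih]
    simp only [decide_eq_true_eq]
    rcases l.splitBy _ with _ | ⟨_ | ⟨b, t⟩, L⟩ <;> rfl

theorem descRuns_eq_splitBy (l : List ℕ) : descRuns l = l.splitBy fun a b => decide (b < a) := by
  induction l with
  | nil => rfl
  | cons a l ih =>
    rw [splitBy_cons, descRuns, ih]
    simp only [decide_eq_true_eq]
    rcases l.splitBy _ with _ | ⟨_ | ⟨b, t⟩, L⟩ <;> rfl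

theorem splitBy_decide_eq_iff {α : Type*} {r : α → α → Prop} [DecidableRel r] [IsTrans α r]
    {l : List α} {L : List (List α)} :
    l.splitBy (fun a b => decide (r a b)) = L ↔
      l = L.flatten ∧ (∀ A ∈ L, A ≠ [] ∧ A.Pairwise r) ∧
        L.IsChain fun A B => ∃ hA hB, ¬ r (A.getLast hA) (B.head hB) := by
  simp only [List.splitBy_eq_iff, decide_eq_true_eq, decide_eq_false_iff_not,
    List.isChain_iff_pairwise, ← List.forall_mem_ne, forall_and]
  grind

theorem head_eq_bmin {A : List ℕ} (hA : A.Pairwise (· < ·)) (hne : A ≠ []) :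
    A.head hne = bmin A.toFinset := by
  have hmin := bmin_mem ((List.toFinset_nonempty_iff _).2 hne)
  exact ((hA.imp le_of_lt).rel_head (List.mem_toFinset.1 hmin)).antisymm
    (bmin_le (List.mem_toFinset.2 (List.head_mem hne)))

theorem getLast_eq_bmax {A : List ℕ} (hA : A.Pairwise (· < ·)) (hne : A ≠ []) :
    A.getLast hne = bmax A.toFinset := by
  refine le_antisymm (le_bmax (List.mem_toFinset.2 (List.getLast_mem hne))) ?_
  have hmax := bmax_mem ((List.toFinset_nonempty_iff _).2 hne)
  exact (hA.imp le_of_lt).rel_getLast (List.mem_toFinset.1 hmax)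

theorem ascRuns_eq_iff {l : List ℕ} {L : List (List ℕ)} :
    ascRuns l = L ↔ l = L.flatten ∧ (∀ A ∈ L, A ≠ [] ∧ A.Pairwise (· < ·)) ∧
      L.IsChain fun A A' => bmin A'.toFinset ≤ bmax A.toFinset := by
  rw [ascRuns_eq_splitBy, splitBy_decide_eq_iff]
  refine and_congr_right fun _ => and_congr_right fun hL =>
    List.IsChain.iff_of_mem_imp fun A A' hA hA' => ?_
  obtain ⟨hne, hasc⟩ := hL A hA
  obtain ⟨hne', hasc'⟩ := hL A' hA'
  simp only [hne, hne', ne_eq, not_false_eq_true, exists_true_left, not_lt,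
    getLast_eq_bmax hasc, head_eq_bmin hasc']

theorem descRuns_eq_map_reverse_iff {l : List ℕ} {L : List (List ℕ)} :
    descRuns l = L.map List.reverse ↔
      l = (L.map List.reverse).flatten ∧ (∀ A ∈ L, A ≠ [] ∧ A.Pairwise (· < ·)) ∧
        L.IsChain fun A A' => bmin A.toFinset ≤ bmax A'.toFinset := by
  rw [descRuns_eq_splitBy, splitBy_decide_eq_iff (r := (· > ·)), List.isChain_map]
  simp only [List.forall_mem_map, ne_eq, List.reverse_eq_nil_iff, List.pairwise_reverse, gt_iff_lt]
  refine and_congr_right fun _ => and_congr_right fun hL =>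
    List.IsChain.iff_of_mem_imp fun A A' hA hA' => ?_
  obtain ⟨hne, hasc⟩ := hL A hA
  obtain ⟨hne', hasc'⟩ := hL A' hA'
  simp only [hne, hne', not_false_eq_true, exists_true_left, not_lt, List.getLast_reverse,
    List.head_reverse, getLast_eq_bmax hasc', head_eq_bmin hasc]

theorem toFinset_subset_toFinset_flatten {A : List ℕ} {L : List (List ℕ)} (hA : A ∈ L) :
    A.toFinset ⊆ L.flatten.toFinset :=
  fun _ hx => List.mem_toFinset.2 (List.mem_flatten_of_mem hA (List.mem_toFinset.1 hx))

theorem ascRuns_flatten {L : List (List ℕ)} (hL : ∀ A ∈ L, A ≠ [] ∧ A.Pairwise (· < ·)) :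
    ascRuns L.flatten =
      (L.splitBy fun A A' => decide (bmax A.toFinset < bmin A'.toFinset)).map List.flatten := by
  obtain ⟨hflat, hne, hchain, hadj⟩ := List.splitBy_eq_iff.1
    (rfl : L.splitBy (fun A A' => decide (bmax A.toFinset < bmin A'.toFinset)) = _)
  generalize L.splitBy _ = 𝓖 at *
  subst hflat
  rw [ascRuns_eq_iff, List.forall_mem_map, List.isChain_map]
  refine ⟨List.flatten_flatten, fun G hG => ?_, hadj.imp_of_mem_imp ?_⟩
  · have hGL : ∀ A ∈ G, A ≠ [] ∧ A.Pairwise (· < ·) := fun A hA =>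
      hL A (List.mem_flatten_of_mem hG hA)
    obtain ⟨A, hA⟩ := List.exists_mem_of_ne_nil G (ne_of_mem_of_not_mem hG hne)
    refine ⟨fun h => (hGL A hA).1 (List.flatten_eq_nil_iff.1 h A hA), ?_⟩
    rw [← List.isChain_iff_pairwise, List.isChain_flatten fun h => (hGL _ h).1 rfl]
    refine ⟨fun A hA => (hGL A hA).2.isChain, (hchain G hG).imp fun A A' hAA' x hx y hy => ?_⟩
    calc
      x ≤ bmax A.toFinset := le_bmax (List.mem_toFinset.2 (List.mem_of_getLast? hx))
      _ < bmin A'.toFinset := of_decide_eq_true hAA'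
      _ ≤ y := bmin_le (List.mem_toFinset.2 (List.mem_of_head? hy))
  · rintro G G' - hG' ⟨hne, hne', hlt⟩
    have hhead := hL _ (List.mem_flatten_of_mem hG' (List.head_mem hne'))
    exact bmin_le_bmax_of_subset ((List.toFinset_nonempty_iff _).2 hhead.1)
      (toFinset_subset_toFinset_flatten (List.head_mem hne'))
      (toFinset_subset_toFinset_flatten (List.getLast_mem hne)) (not_lt.1 (of_decide_eq_false hlt))

theorem isChain_ascRuns_popStack (π : List ℕ) :
    (ascRuns (popStack π)).IsChain fun A A' => bmin A.toFinset ≤ bmax A'.toFinset := by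
  have hmap : descRuns π = ((descRuns π).map List.reverse).map List.reverse := by simp
  rw [popStack]
  generalize (descRuns π).map List.reverse = L at *
  obtain ⟨-, hL, hoverlap⟩ := descRuns_eq_map_reverse_iff.1 hmap
  rw [ascRuns_flatten hL, List.isChain_map]
  generalize h𝓖 : L.splitBy _ = 𝓖
  obtain ⟨rfl, hne, -, -⟩ := List.splitBy_eq_iff.1 h𝓖
  refine ((List.isChain_flatten hne).1 hoverlap).2.imp_of_mem_imp fun G G' hG hG' h => ?_
  have hGne := ne_of_mem_of_not_mem hG hne
  have hGne' := ne_of_mem_of_not_mem hG' hne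
  have hlast := List.getLast_mem hGne
  exact bmin_le_bmax_of_subset
    ((List.toFinset_nonempty_iff _).2 (hL _ (List.mem_flatten_of_mem hG hlast)).1)
    (toFinset_subset_toFinset_flatten hlast)
    (toFinset_subset_toFinset_flatten (List.head_mem hGne'))
    (h _ (List.getLast?_eq_some_getLast hGne) _ (List.head?_eq_some_head hGne'))

theorem popStack_flatten_map_reverse_ascRuns {σ : List ℕ}
    (hσ : (ascRuns σ).IsChain fun A A' => bmin A.toFinset ≤ bmax A'.toFinset) :
    popStack ((ascRuns σ).map List.reverse).flatten = σ := by
  obtain ⟨hflat, hasc, -⟩ := ascRuns_eq_iff.1 (rfl : ascRuns σ = _)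
  have hdesc := descRuns_eq_map_reverse_iff.2 ⟨rfl, hasc, hσ⟩
  rw [popStack, hdesc]
  simpa using hflat.symm

theorem flatten_map_reverse_perm {α : Type*} (L : List (List α)) :
    (L.map List.reverse).flatten.Perm L.flatten :=
  List.Perm.flatten_congr <| by simp [List.forall₂_map_left_iff]

theorem isPopStacked_iff {n : ℕ} {σ : List ℕ} (hσ : IsPermOf n σ) :
    IsPopStacked n σ ↔
      (ascRuns σ).IsChain fun A A' => bmin A.toFinset ≤ bmax A'.toFinset := by
  constructor
  · rintro ⟨π, -, rfl⟩
    exact isChain_ascRuns_popStack π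
  · intro h
    refine ⟨_, (flatten_map_reverse_perm _).trans ?_, popStack_flatten_map_reverse_ascRuns h⟩
    rwa [← (ascRuns_eq_iff.1 rfl).1]

/-- The word obtained from a ballot by listing each block in increasing order. -/
def ballotWord (l : List (Finset ℕ)) : List ℕ :=
  (l.map fun B => B.sort (· ≤ ·)).flatten

/-- The blocks underlying the ascending runs of a word: the ballot of a pop-stacked permutation. -/
def runBlocks (σ : List ℕ) : List (Finset ℕ) :=
  (ascRuns σ).map List.toFinset

theorem ballotWord_runBlocks (σ : List ℕ) : ballotWord (runBlocks σ) = σ := by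
  obtain ⟨hflat, hasc, -⟩ := ascRuns_eq_iff.1 (rfl : ascRuns σ = _)
  have hsort : ∀ A ∈ ascRuns σ, A.toFinset.sort (· ≤ ·) = id A := fun A hA =>
    (List.toFinset_sort (· ≤ ·) ((hasc A hA).2.imp ne_of_lt)).2 ((hasc A hA).2.imp le_of_lt)
  rw [ballotWord, runBlocks, List.map_map]
  exact (congrArg List.flatten (List.map_congr_left hsort)).trans (by simpa using hflat.symm)

theorem runBlocks_ballotWord {l : List (Finset ℕ)} (hne : ∀ B ∈ l, B.Nonempty)
    (hl : l.IsChain fun B C => bmin C ≤ bmax B) : runBlocks (ballotWord l) = l := by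
  have hruns : ascRuns (ballotWord l) = l.map fun B => B.sort (· ≤ ·) := by
    rw [ascRuns_eq_iff, List.forall_mem_map, List.isChain_map]
    simp only [Finset.sort_toFinset]
    refine ⟨rfl, fun B hB => ⟨?_, (Finset.sortedLT_sort B).pairwise⟩, hl⟩
    rw [← List.toFinset_nonempty_iff, Finset.sort_toFinset]
    exact hne B hB
  simp [runBlocks, hruns, Function.comp_def]

theorem isPermOf_ballotWord_iff {n : ℕ} {l : List (Finset ℕ)} (hne : ∀ B ∈ l, B.Nonempty) :
    IsPermOf n (ballotWord l) ↔ IsBallot (Finset.Icc 1 n) l := by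
  have hmem (x : ℕ) : x ∈ ballotWord l ↔ ∃ B ∈ l, x ∈ B := by
    simp [ballotWord]
  have hnodup : (ballotWord l).Nodup ↔ l.Pairwise Disjoint := by
    simp [ballotWord, List.nodup_flatten, List.pairwise_map, ← List.disjoint_toFinset_iff_disjoint]
  have hperm : IsPermOf n (ballotWord l) ↔
      (ballotWord l).Nodup ∧ ∀ x, x ∈ Finset.Icc 1 n ↔ x ∈ ballotWord l := by
    constructor
    · intro h
      exact ⟨h.nodup_iff.2 List.nodup_range', fun x => by
        rw [h.mem_iff, List.mem_range'_1, Finset.mem_Icc]; omega⟩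
    · rintro ⟨h, h'⟩
      refine (List.perm_ext_iff_of_nodup h List.nodup_range').2 fun x => ?_
      rw [← h', List.mem_range'_1, Finset.mem_Icc]
      omega
  rw [hperm, hnodup, isBallot_iff, and_iff_right hne]
  simp only [hmem]

theorem runBlocks_mem_overlappingBallots_iff {n k : ℕ} {σ : List ℕ} :
    runBlocks σ ∈ overlappingBallots (Finset.Icc 1 n) k ↔
      IsPermOf n σ ∧ IsPopStacked n σ ∧ (ascRuns σ).length = k := by
  obtain ⟨-, hasc, hchain⟩ := ascRuns_eq_iff.1 (rfl : ascRuns σ = _)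
  have hne : ∀ B ∈ runBlocks σ, B.Nonempty :=
    List.forall_mem_map.2 fun A hA => (List.toFinset_nonempty_iff A).2 (hasc A hA).1
  have hperm : IsPermOf n σ ↔ IsBallot (Finset.Icc 1 n) (runBlocks σ) := by
    rw [← isPermOf_ballotWord_iff hne, ballotWord_runBlocks]
  rw [hperm, overlappingBallots, Set.mem_ofPred_eq]
  refine and_congr_right fun hl => and_congr ?_ (by rw [runBlocks, List.length_map])
  rw [isPopStacked_iff (hperm.2 hl), overlapping_iff_of_pairwise_disjoint hne hl.2.1, runBlocks,
    List.isChain_map, List.isChain_map, and_iff_right hchain]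

theorem popCountK_eq_ncard (n k : ℕ) :
    popCountK n k = (overlappingBallots (Finset.Icc 1 n) k).ncard := by
  change {σ | IsPermOf n σ ∧ IsPopStacked n σ ∧ (ascRuns σ).length = k}.ncard = _
  have hinv : ∀ l ∈ overlappingBallots (Finset.Icc 1 n) k, runBlocks (ballotWord l) = l :=
    fun l hl => runBlocks_ballotWord hl.1.1
      ((overlapping_iff_of_pairwise_disjoint hl.1.1 hl.1.2.1).1 hl.2.1).1
  refine Set.BijOn.ncard_eq (f := runBlocks) (Set.InvOn.bijOn (f' := ballotWord)
    ⟨fun σ _ => ballotWord_runBlocks σ, hinv⟩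
    (fun σ hσ => runBlocks_mem_overlappingBallots_iff.2 hσ) fun l hl => ?_)
  exact runBlocks_mem_overlappingBallots_iff.1 ((hinv l hl).symm ▸ hl)

theorem popCountK_eq_sum {n k : ℕ} (hk : k ≠ 0) :
    popCountK n k = ∑ a ∈ Finset.Icc 1 n, ∑ b ∈ Finset.Icc a n, fcdk a b n k := by
  rw [popCountK_eq_ncard, sum_sum_fcdk]
  congr 1
  ext l
  refine ⟨fun hl => ⟨hl, ?_⟩, fun hl => hl.1⟩
  have hlne : l ≠ [] := List.ne_nil_of_length_pos (hl.2.2 ▸ Nat.pos_of_ne_zero hk)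
  have hmem := List.getLast_mem hlne
  have hne := hl.1.1 _ hmem
  have hsub := hl.1.subset hmem
  have hmax := (Finset.mem_Icc.1 (hsub (bmax_mem hne))).2
  exact ⟨_, List.getLast?_eq_some_getLast hlne, hsub (bmin_mem hne),
    Finset.mem_Icc.2 ⟨bmin_le (bmax_mem hne), hmax⟩⟩

/-- the recurrence for `f_{c,d}(n,k)` and the count of pop-stacked
permutations of `[n]` with exactly `k` ascending runs. -/
theorem statement13 (n c d k : ℕ) (h1 : 1 ≤ c) (h2 : c ≤ d) (h3 : d ≤ n) (hk : 1 ≤ k) :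
    fcdk c d n k =
      (if c = 1 ∧ d = n ∧ k = 1 then 1 else 0) +
      (if c = d then
        ∑ a ∈ Finset.Icc 1 (c - 1), ∑ b ∈ Finset.Icc c n, fcdk a b (n - 1) (k - 1)
      else 0) +
      (if c < d then
        ∑ ℓ ∈ Finset.range (d - c), Nat.choose (d - c - 1) ℓ *
          ∑ a ∈ Finset.Icc 1 (d - ℓ - 2), ∑ b ∈ Finset.Icc c (n - ℓ - 2),
            fcdk a b (n - ℓ - 2) (k - 1)
      else 0) ∧
    popCountK n k = ∑ a ∈ Finset.Icc 1 n, ∑ b ∈ Finset.Icc a n, fcdk a b n k := by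
  refine ⟨?_, popCountK_eq_sum (Nat.ne_of_gt hk)⟩
  obtain ⟨k, rfl⟩ := Nat.exists_eq_add_of_le' hk
  rcases eq_or_ne k 0 with rfl | hk₀
  · simp [fcdk_one (h1.trans (h2.trans h3)), fcdk_zero]
  · rcases h2.eq_or_lt with rfl | hcd
    · simp [fcdk_self_succ h1 h3 hk₀, hk₀]
    · simp [fcdk_succ_of_lt h1 hcd h3 hk₀, hk₀, hcd, hcd.ne]
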